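/- Let u be a Lyndon word and v a nonempty word with v > u in the lexicographic order and l(v) ≤ l(u). Then v ≫ u. -/

import Mathlib

/-- A word `u` is a Lyndon word if it is nonempty and lexicographically smaller than
each of its proper nonempty suffixes. -/
def IsLyndon {X : Type*} [LinearOrder X] (u : List X) : Prop :=
  u ≠ [] ∧ ∀ v w : List X, v ≠ [] → w ≠ [] → u = v ++ w → List.Lex (· < ·) u w

/-- `ls` is a Lyndon factorization of `u`: all factors are Lyndon words, the factors are
(lexicographically) nonincreasing, and their concatenation is `u`. -/
def IsLyndonFactorization {X : Type*} [LinearOrder X] (ls : List (List X)) (u : List X) : Prop :=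
  (∀ l ∈ ls, IsLyndon l) ∧ ls.Chain' (fun a b => ¬ List.Lex (· < ·) a b) ∧ ls.flatten = u

/-- `v ≫ u` : the first Lyndon letter of the Lyndon decomposition of `v` is
lexicographically greater than `u`. -/
def MuchGt {X : Type*} [LinearOrder X] (v u : List X) : Prop :=
  ∃ (l : List X) (t : List (List X)),
    IsLyndonFactorization (l :: t) v ∧ List.Lex (· < ·) u l

/-!
Suppose that all Lyndon letters of `v` are at most `u`, yet `u < v`. Write `v = l ++ v'` with `l`
the first letter. From `l ≤ u < l ++ v'` it follows that `u = l ++ u'` with `u' < v'`. The length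
bound forces `u' ≠ []`, so `u ≤ u' < v'` because `u` is a Lyndon word. Thus the shorter product
`v'` of words at most `u` is again greater than `u`; descending to the empty product gives a
contradiction.
-/

section LexOrder

variable {X : Type*}

theorem append_lt_append_of_not_isPrefix [LT X] {u v : List X} (h : u < v) (hp : ¬ u <+: v)
    (s t : List X) : u ++ s < v ++ t := by
  change List.Lex (· < ·) u v at h
  induction h with
  | nil => exact absurd List.nil_prefix hp
  | cons _ ih => exact List.Lex.cons (ih fun h => hp (List.cons_prefix_cons.2 ⟨rfl, h⟩))
  | rel hab => exact List.Lex.rel hab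

theorem append_lt_append_left_iff [LT X] [Std.Irrefl (· < · : X → X → Prop)] (u : List X)
    {v w : List X} : u ++ v < u ++ w ↔ v < w := by
  induction u with
  | nil => rfl
  | cons a u ih => simp [ih]

theorem isPrefix_of_le_of_lt_append [LinearOrder X] {l u w : List X} (hlu : l ≤ u)
    (huw : u < l ++ w) : l <+: u := by
  by_contra hp
  have hne : l ≠ u := by
    rintro rfl
    exact hp List.prefix_rfl
  have hlt : l ++ w < u := by
    simpa using append_lt_append_of_not_isPrefix (hlu.lt_of_ne hne) hp w []
  exact hlt.not_gt huw

end LexOrder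

section LyndonWords

variable {X : Type*} [LinearOrder X] {l m u v w : List X} {ls : List (List X)}

theorem isLyndon_singleton (a : X) : IsLyndon [a] := by
  refine ⟨List.cons_ne_nil a [], fun v w hv hw h => ?_⟩
  rcases List.singleton_eq_append_iff.1 h with ⟨rfl, -⟩ | ⟨-, rfl⟩
  · exact absurd rfl hv
  · exact absurd rfl hw

namespace IsLyndon

theorem le_of_isSuffix (hu : IsLyndon u) (hw : w ≠ []) (h : w <:+ u) : u ≤ w := by
  obtain ⟨p, rfl⟩ := h
  rcases eq_or_ne p [] with rfl | hp
  · exact le_rfl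
  · exact le_of_lt (hu.2 p w hp hw rfl)

theorem append_lt_right (hm : IsLyndon m) (hl : l ≠ []) (h : l < m) : l ++ m < m := by
  by_cases hp : l <+: m
  · obtain ⟨m', rfl⟩ := hp
    have hm' : m' ≠ [] := by
      rintro rfl
      simp at h
    exact (append_lt_append_left_iff l).2 (hm.2 l m' hl hm' rfl)
  · simpa using append_lt_append_of_not_isPrefix h hp m []

theorem append (hl : IsLyndon l) (hm : IsLyndon m) (h : l < m) : IsLyndon (l ++ m) := by
  have hlm : l ++ m < m := hm.append_lt_right hl.1 h
  refine ⟨List.append_ne_nil_of_left_ne_nil hl.1 m, fun v w hv hw e => ?_⟩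
  rcases List.append_eq_append_iff.1 e with ⟨c, -, rfl⟩ | ⟨c, rfl, rfl⟩
  · exact hlm.trans_le (hm.le_of_isSuffix hw (List.suffix_append c w))
  · rcases eq_or_ne c [] with rfl | hc
    · exact hlm
    · have hp : ¬ v ++ c <+: c := fun hp => hv <| by simpa using hp.length_le
      exact append_lt_append_of_not_isPrefix (hl.2 v c hv hc rfl) hp m m

theorem flatten_le (hu : IsLyndon u) (hls : ∀ l ∈ ls, l ≤ u)
    (hlen : ls.flatten.length ≤ u.length) : ls.flatten ≤ u := by
  induction ls with
  | nil => exact not_lt.1 (List.not_lt_nil u)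
  | cons l t ih =>
    obtain ⟨hlu, ht⟩ := List.forall_mem_cons.1 hls
    rw [List.flatten_cons, List.length_append] at hlen
    by_contra! h
    rw [List.flatten_cons] at h
    obtain ⟨u', rfl⟩ := isPrefix_of_le_of_lt_append hlu h
    have hu't : u' < t.flatten := (append_lt_append_left_iff l).1 h
    have hu' : u' ≠ [] := by
      rintro rfl
      have ht_nil : t.flatten = [] := List.eq_nil_of_length_eq_zero (by simpa using hlen)
      simp [ht_nil] at hu't
    have huu' : l ++ u' ≤ u' := hu.le_of_isSuffix hu' (List.suffix_append l u')
    exact (huu'.trans_lt hu't).not_ge (ih ht (by omega))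

end IsLyndon

namespace IsLyndonFactorization

theorem exists_append (hl : IsLyndon l) (hw : IsLyndonFactorization ls w) :
    ∃ ls', IsLyndonFactorization ls' (l ++ w) := by
  induction ls generalizing l w with
  | nil =>
    obtain ⟨-, -, rfl⟩ := hw
    exact ⟨[l], by simpa using hl, List.isChain_singleton l, by simp⟩
  | cons m t ih =>
    obtain ⟨hlyn, hchain, rfl⟩ := hw
    obtain ⟨hm, ht⟩ := List.forall_mem_cons.1 hlyn
    by_cases h : l < m
    · simpa using ih (hl.append hm h) ⟨ht, hchain.tail, rfl⟩
    · exact ⟨l :: m :: t, List.forall_mem_cons.2 ⟨hl, hlyn⟩,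
        List.isChain_cons_cons.2 ⟨h, hchain⟩, List.flatten_cons⟩

theorem le_head (h : IsLyndonFactorization (l :: ls) v) (hm : m ∈ l :: ls) : m ≤ l := by
  have hchain : (l :: ls).IsChain (· ≥ ·) := h.2.1.imp fun _ _ => not_lt.1
  rcases List.mem_cons.1 hm with rfl | hm
  · exact le_rfl
  · exact List.rel_of_pairwise_cons hchain.pairwise hm

theorem lt_head (h : IsLyndonFactorization (l :: ls) v) (hu : IsLyndon u) (huv : u < v)
    (hlen : v.length ≤ u.length) : u < l := by
  by_contra! hlu
  obtain rfl := h.2.2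
  exact (hu.flatten_le (fun m hm => (h.le_head hm).trans hlu) hlen).not_gt huv

end IsLyndonFactorization

theorem exists_isLyndonFactorization (w : List X) : ∃ ls, IsLyndonFactorization ls w := by
  induction w with
  | nil => exact ⟨[], List.forall_mem_nil _, List.isChain_nil, rfl⟩
  | cons a w ih =>
    obtain ⟨ls, h⟩ := ih
    exact h.exists_append (isLyndon_singleton a)

theorem muchGt_of_gt_of_short_general (hu : IsLyndon u) (huv : List.Lex (· < ·) u v)
    (hlen : v.length ≤ u.length) : MuchGt v u := by
  obtain ⟨ls, h⟩ := exists_isLyndonFactorization v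
  cases ls with
  | nil =>
    obtain rfl : [] = v := h.2.2
    exact absurd huv List.not_lex_nil
  | cons l t => exact ⟨l, t, h, h.lt_head hu huv hlen⟩

end LyndonWords

/-- If `u` is a Lyndon word and `v` a nonempty word with `v > u` lexicographically and
`l(v) ≤ l(u)`, then `v ≫ u`. -/
theorem muchGt_of_gt_of_short {X : Type*} [Fintype X] [LinearOrder X]
    (u v : List X) (hu : IsLyndon u) (hv : v ≠ [])
    (huv : List.Lex (· < ·) u v) (hlen : v.length ≤ u.length) :
    MuchGt v u :=
  muchGt_of_gt_of_short_general hu huv hlen
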